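/- Let u be a smooth function on ℝ³ \ {0} with compact support in ℝ³ \ {0}, and let U(y) = |y| u(y/|y|²) be its Kelvin transform. Then ∫_{ℝ³} |ΔU(y)|² dy = ∫_{ℝ³} |Δu(x)|² dx. -/

import Mathlib

open MeasureTheory

noncomputable section

abbrev E3 := EuclideanSpace ℝ (Fin 3)

/-- The Euclidean Laplacian on `ℝ³`: sum of pure second partial derivatives. -/
def lap (f : E3 → ℝ) (x : E3) : ℝ :=
  ∑ i : Fin 3,
    fderiv ℝ (fun y => fderiv ℝ f y (EuclideanSpace.single i (1:ℝ))) x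
      (EuclideanSpace.single i (1:ℝ))

/-- The Kelvin transform `U(y) = |y| u(y/|y|²)`. -/
def kelvin (u : E3 → ℝ) (y : E3) : ℝ := ‖y‖ * u ((‖y‖ ^ 2)⁻¹ • y)

open Module InnerProductSpace EuclideanGeometry
open scoped Laplacian Gradient Topology

/-!
Write `M` for multiplication by `‖x‖²`, `n` for the dimension, and `y* = y / ‖y‖²`. With
`v = ‖x‖⁻² u`, the transform of `u` is `U(y) = ‖y‖ ^ (4 - n) u(y*) = ‖y‖ ^ (2 - n) v(y*)`, the
classical Kelvin transform of `v`. Since `‖y‖ ^ (2 - n)` is harmonic and the inversion is conformal,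
`ΔU(y) = ‖y‖ ^ (-2 - n) (Δv)(y*)`; the inversion has Jacobian `‖y‖ ^ (-2n)`, so
`∫ |ΔU|² = ∫ |MΔv|²`. As `u = Mv`, it remains to see that `MΔv` and `ΔMv` have the same `L²` norm.

Let `H = x · ∇ + n / 2`. Then `ΔM - MΔ = 4H`, so the difference of the two squared norms is
`4 ∫ Hv (ΔMv + MΔv)`. The operator `H` is skew-symmetric and commutes with `MΔ`, which is
homogeneous of degree zero, so moving `ΔM` and then `H` across gives
`∫ Hv ΔMv = ∫ (MΔHv) v = ∫ (HMΔv) v = -∫ MΔv Hv`, and the difference vanishes.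
-/

section IteratedDerivatives

variable {E F : Type*} [NormedAddCommGroup E] [NormedSpace ℝ E]
  [NormedAddCommGroup F] [NormedSpace ℝ F]

theorem differentiableAt_fderiv_apply {f : E → F} {x : E} (hf : ContDiffAt ℝ 2 f x) (v : E) :
    DifferentiableAt ℝ (fun y => fderiv ℝ f y v) x :=
  ((hf.fderiv_right (m := 1) le_rfl).differentiableAt one_ne_zero).clm_apply
    (differentiableAt_const v)

theorem fderiv_fderiv_apply {f : E → F} {x : E} (hf : ContDiffAt ℝ 2 f x) (v w : E) :
    fderiv ℝ (fun y => fderiv ℝ f y v) x w = fderiv ℝ (fderiv ℝ f) x w v := by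
  have hd := (hf.fderiv_right (m := 1) le_rfl).differentiableAt one_ne_zero
  simp [fderiv_clm_apply hd (differentiableAt_const v)]

theorem fderiv_fderiv_apply_self {f : E → F} {x : E} (hf : ContDiffAt ℝ 2 f x) (v : E) :
    fderiv ℝ (fun y => fderiv ℝ f y y) x v =
      fderiv ℝ (fun y => fderiv ℝ f y v) x x + fderiv ℝ f x v := by
  have hd := (hf.fderiv_right (m := 1) le_rfl).differentiableAt one_ne_zero
  rw [fderiv_clm_apply hd differentiableAt_fun_id, fderiv_fderiv_apply hf,
    (hf.isSymmSndFDerivAt (by simp)).eq x v]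
  simp [add_comm]

theorem contDiff_fderiv_apply {m n : WithTop ℕ∞} {f : E → F} (hf : ContDiff ℝ n f)
    (hmn : m + 1 ≤ n) (v : E) : ContDiff ℝ m fun y => fderiv ℝ f y v :=
  (hf.fderiv_right hmn).clm_apply contDiff_const

theorem contDiff_fderiv_apply_self {m n : WithTop ℕ∞} {f : E → F} (hf : ContDiff ℝ n f)
    (hmn : m + 1 ≤ n) : ContDiff ℝ m fun y => fderiv ℝ f y y :=
  (hf.fderiv_right hmn).clm_apply contDiff_id

theorem continuous_fderiv_apply {f : E → F} (hf : ContDiff ℝ 1 f) (v : E) :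
    Continuous fun x => fderiv ℝ f x v :=
  (hf.continuous_fderiv one_ne_zero).clm_apply continuous_const

theorem hasCompactSupport_fderiv_apply_self {f : E → F} (hf : HasCompactSupport f) :
    HasCompactSupport fun x => fderiv ℝ f x x :=
  hf.mono' <| Function.support_subset_iff'.2 fun x hx => by
    simp [fderiv_of_notMem_tsupport ℝ hx]

end IteratedDerivatives

section Laplacian

variable {E E' F : Type*}
  [NormedAddCommGroup E] [InnerProductSpace ℝ E] [FiniteDimensional ℝ E]
  [NormedAddCommGroup E'] [InnerProductSpace ℝ E'] [FiniteDimensional ℝ E']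
  [NormedAddCommGroup F] [NormedSpace ℝ F]

theorem laplacian_eq_sum_fderiv_fderiv {ι : Type*} [Fintype ι] (b : OrthonormalBasis ι ℝ E)
    {f : E → F} {x : E} (hf : ContDiffAt ℝ 2 f x) :
    Δ f x = ∑ i, fderiv ℝ (fun y => fderiv ℝ f y (b i)) x (b i) := by
  simp [laplacian_eq_iteratedFDeriv_orthonormalBasis f b, iteratedFDeriv_two_apply,
    fderiv_fderiv_apply hf]

theorem sum_fderiv_smul_fderiv {ι : Type*} [Fintype ι] (b : OrthonormalBasis ι ℝ E)
    (f : E → ℝ) (g : E → F) (x : E) :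
    ∑ i, fderiv ℝ f x (b i) • fderiv ℝ g x (b i) = fderiv ℝ g x (∇ f x) := by
  conv_rhs => rw [← b.sum_repr' (∇ f x)]
  simp [inner_gradient_right]

theorem laplacian_smul_fun {f : E → ℝ} {g : E → F} {x : E}
    (hf : ContDiffAt ℝ 2 f x) (hg : ContDiffAt ℝ 2 g x) :
    Δ (fun y => f y • g y) x =
      f x • Δ g x + (2 : ℝ) • fderiv ℝ g x (∇ f x) + Δ f x • g x := by
  let b := stdOrthonormalBasis ℝ E
  have hfd := hf.differentiableAt two_ne_zero
  have hgd := hg.differentiableAt two_ne_zero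
  have fderiv_smul_nhds (v : E) : (fun y => fderiv ℝ (fun z => f z • g z) y v) =ᶠ[𝓝 x]
      fun y => f y • fderiv ℝ g y v + fderiv ℝ f y v • g y := by
    filter_upwards [hf.eventually (by simp), hg.eventually (by simp)] with y hfy hgy
    simp [fderiv_fun_smul (hfy.differentiableAt two_ne_zero) (hgy.differentiableAt two_ne_zero)]
  have fderiv_fderiv_smul (v : E) :
      fderiv ℝ (fun y => fderiv ℝ (fun z => f z • g z) y v) x v =
        f x • fderiv ℝ (fun y => fderiv ℝ g y v) x v
          + (2 : ℝ) • fderiv ℝ f x v • fderiv ℝ g x v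
          + fderiv ℝ (fun y => fderiv ℝ f y v) x v • g x := by
    have hf' := differentiableAt_fderiv_apply hf v
    have hg' := differentiableAt_fderiv_apply hg v
    rw [(fderiv_smul_nhds v).fderiv_eq, fderiv_fun_add (hfd.fun_smul hg') (hf'.fun_smul hgd),
      fderiv_fun_smul hfd hg', fderiv_fun_smul hf' hgd]
    simp only [add_apply, smul_apply, ContinuousLinearMap.smulRight_apply]
    module
  simp only [laplacian_eq_sum_fderiv_fderiv b (hf.fun_smul hg), laplacian_eq_sum_fderiv_fderiv b hf,
    laplacian_eq_sum_fderiv_fderiv b hg, ← sum_fderiv_smul_fderiv b, fderiv_fderiv_smul,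
    Finset.sum_add_distrib, Finset.smul_sum, Finset.sum_smul]

theorem laplacian_comp_of_fderiv_eq_smul_isometry {g : E' → F} {φ : E → E'} {x : E} {c : ℝ}
    {L : E ≃ₗᵢ[ℝ] E'} (hg : ContDiffAt ℝ 2 g (φ x)) (hφ : ContDiffAt ℝ 2 φ x)
    (hL : fderiv ℝ φ x = c • (L : E →L[ℝ] E')) :
    Δ (g ∘ φ) x = c ^ 2 • Δ g (φ x) + fderiv ℝ g (φ x) (Δ φ x) := by
  let b := stdOrthonormalBasis ℝ E
  have hφd := hφ.differentiableAt two_ne_zero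
  have hg' : DifferentiableAt ℝ (fderiv ℝ g) (φ x) :=
    (hg.fderiv_right (m := 1) le_rfl).differentiableAt one_ne_zero
  have fderiv_comp_nhds (v : E) : (fun y => fderiv ℝ (g ∘ φ) y v) =ᶠ[𝓝 x]
      fun y => fderiv ℝ g (φ y) (fderiv ℝ φ y v) := by
    filter_upwards [hφ.eventually (by simp), hφ.continuousAt.eventually (hg.eventually (by simp))]
      with y hφy hgy
    simp [fderiv_comp y (hgy.differentiableAt two_ne_zero) (hφy.differentiableAt two_ne_zero)]
  have fderiv_fderiv_comp (v : E) : fderiv ℝ (fun y => fderiv ℝ (g ∘ φ) y v) x v =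
      c ^ 2 • fderiv ℝ (fun z => fderiv ℝ g z (L v)) (φ x) (L v)
        + fderiv ℝ g (φ x) (fderiv ℝ (fun y => fderiv ℝ φ y v) x v) := by
    have hgφ : fderiv ℝ (fun y => fderiv ℝ g (φ y)) x =
        (fderiv ℝ (fderiv ℝ g) (φ x)).comp (fderiv ℝ φ x) := fderiv_comp x hg' hφd
    rw [(fderiv_comp_nhds v).fderiv_eq,
      fderiv_clm_apply (c := fun y => fderiv ℝ g (φ y)) (hg'.comp x hφd)
        (differentiableAt_fderiv_apply hφ v), hgφ,
      fderiv_fderiv_apply hg]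
    simp [hL, smul_smul, sq, add_comm]
  rw [laplacian_eq_sum_fderiv_fderiv b (hg.comp x hφ), laplacian_eq_sum_fderiv_fderiv b hφ,
    laplacian_eq_sum_fderiv_fderiv (b.map L) hg]
  simp [fderiv_fderiv_comp, Finset.sum_add_distrib, Finset.smul_sum]

theorem contDiff_laplacian {m n : WithTop ℕ∞} {f : E → F} (hf : ContDiff ℝ n f)
    (hmn : m + 2 ≤ n) : ContDiff ℝ m (Δ f) := by
  have hf2 : ContDiff ℝ 2 f := hf.of_le (le_trans le_add_self hmn)
  have h : Δ f = _ := funext fun x =>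
    laplacian_eq_sum_fderiv_fderiv (stdOrthonormalBasis ℝ E) hf2.contDiffAt
  rw [h]
  exact ContDiff.sum fun i _ => contDiff_fderiv_apply
    (contDiff_fderiv_apply hf (m := m + 1) (by rwa [add_assoc, one_add_one_eq_two]) _) le_rfl _

theorem hasCompactSupport_laplacian {f : E → F} (hf : HasCompactSupport f) :
    HasCompactSupport (Δ f) :=
  hf.mono' <| Function.support_subset_iff'.2 fun x hx => by
    have h : f =ᶠ[𝓝 x] fun _ => 0 := notMem_tsupport_iff_eventuallyEq.1 hx
    simpa using (laplacian_congr_nhds h).self_of_nhds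

theorem laplacian_fderiv_apply_self {f : E → F} (hf : ContDiff ℝ 3 f) (x : E) :
    Δ (fun y => fderiv ℝ f y y) x = fderiv ℝ (Δ f) x x + (2 : ℝ) • Δ f x := by
  let b := stdOrthonormalBasis ℝ E
  have hf2 : ContDiff ℝ 2 f := hf.of_le (by norm_num)
  have hf' (v : E) : ContDiff ℝ 2 fun y => fderiv ℝ f y v :=
    contDiff_fderiv_apply hf (by norm_num) v
  have hΔ : Δ f = fun y => ∑ i, fderiv ℝ (fun z => fderiv ℝ f z (b i)) y (b i) :=
    funext fun y => laplacian_eq_sum_fderiv_fderiv b hf2.contDiffAt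
  have fderiv_fderiv_euler (v : E) :
      fderiv ℝ (fun y => fderiv ℝ (fun z => fderiv ℝ f z z) y v) x v =
        fderiv ℝ (fun y => fderiv ℝ (fun z => fderiv ℝ f z v) y v) x x
          + (2 : ℝ) • fderiv ℝ (fun y => fderiv ℝ f y v) x v := by
    simp only [fderiv_fderiv_apply_self hf2.contDiffAt]
    rw [fderiv_fun_add
      ((contDiff_fderiv_apply_self (m := 1) (hf' v) (by norm_num)).differentiable one_ne_zero x)
      ((hf' v).differentiable two_ne_zero x)]
    rw [add_apply, fderiv_fderiv_apply_self (hf' v).contDiffAt]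
    module
  rw [laplacian_eq_sum_fderiv_fderiv b
    (contDiff_fderiv_apply_self (m := 2) hf (by norm_num)).contDiffAt, hΔ,
    fderiv_fun_sum fun i _ => differentiableAt_fderiv_apply (hf' (b i)).contDiffAt (b i)]
  simp [fderiv_fderiv_euler, Finset.sum_add_distrib, Finset.smul_sum]

end Laplacian

section Norm

variable {E : Type*} [NormedAddCommGroup E] [InnerProductSpace ℝ E]

theorem contDiffAt_norm_zpow {n : WithTop ℕ∞} (k : ℤ) {x : E} (hx : x ≠ 0) :
    ContDiffAt ℝ n (fun y : E => ‖y‖ ^ k) x := by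
  have hnorm : ContDiffAt ℝ n (fun y : E => ‖y‖) x := contDiffAt_norm ℝ hx
  cases k with
  | ofNat m => simpa using hnorm.pow m
  | negSucc m => simpa [zpow_negSucc] using (hnorm.pow (m + 1)).fun_inv (by simpa using hx)

theorem hasFDerivAt_norm {x : E} (hx : x ≠ 0) :
    HasFDerivAt (fun y : E => ‖y‖) (‖x‖⁻¹ • innerSL ℝ x) x := by
  have hx' : ‖x‖ ≠ 0 := norm_ne_zero_iff.2 hx
  have h := (hasStrictFDerivAt_norm_sq x).hasFDerivAt.sqrt (by positivity)
  simp only [Real.sqrt_sq (norm_nonneg _)] at h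
  convert! h using 1
  ext v
  simp only [smul_apply, coe_innerSL_apply, smul_eq_mul, one_div, mul_inv_rev, nsmul_eq_mul,
    Nat.cast_ofNat]
  field_simp

theorem hasGradientAt_norm_zpow [CompleteSpace E] (k : ℤ) {x : E} (hx : x ≠ 0) :
    HasGradientAt (fun y : E => ‖y‖ ^ k) ((k * ‖x‖ ^ (k - 2)) • x) x := by
  have hx' : ‖x‖ ≠ 0 := norm_ne_zero_iff.2 hx
  rw [hasGradientAt_iff_hasFDerivAt]
  convert! (hasDerivAt_zpow k ‖x‖ (.inl hx')).comp_hasFDerivAt x (hasFDerivAt_norm hx) using 1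
  ext v
  simp only [zpow_sub₀ hx', zpow_ofNat, map_smul, smul_apply, toDual_apply_apply, smul_eq_mul,
    coe_innerSL_apply]
  field_simp

theorem gradient_norm_zpow [CompleteSpace E] (k : ℤ) {x : E} (hx : x ≠ 0) :
    ∇ (fun y : E => ‖y‖ ^ k) x = (k * ‖x‖ ^ (k - 2)) • x :=
  (hasGradientAt_norm_zpow k hx).gradient

theorem gradient_norm_sq [CompleteSpace E] (x : E) :
    ∇ (fun y : E => ‖y‖ ^ 2) x = (2 : ℝ) • x := by
  refine ext_inner_right ℝ fun v => ?_
  simp [inner_gradient_left, fderiv_norm_sq_apply, inner_smul_left]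

variable [FiniteDimensional ℝ E]

theorem laplacian_norm_sq (x : E) : Δ (fun y : E => ‖y‖ ^ 2) x = 2 * finrank ℝ E := by
  have fderiv_norm_sq (v : E) :
      (fun y => fderiv ℝ (fun z : E => ‖z‖ ^ 2) y v) = fun y => 2 * inner ℝ y v := by
    ext y
    simp [fderiv_norm_sq_apply]
  have fderiv_fderiv_norm_sq (v : E) :
      fderiv ℝ (fun y => fderiv ℝ (fun z : E => ‖z‖ ^ 2) y v) x v = 2 * ‖v‖ ^ 2 := by
    rw [fderiv_norm_sq,
      fderiv_const_mul (differentiableAt_fun_id.inner ℝ (differentiableAt_const v))]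
    simp [fderiv_inner_apply]
  rw [laplacian_eq_sum_fderiv_fderiv (stdOrthonormalBasis ℝ E) (contDiff_norm_sq ℝ).contDiffAt]
  simp only [fderiv_fderiv_norm_sq]
  simp [mul_comm]

theorem laplacian_norm_zpow (k : ℤ) {x : E} (hx : x ≠ 0) :
    Δ (fun y : E => ‖y‖ ^ k) x = k * (k + finrank ℝ E - 2) * ‖x‖ ^ (k - 2) := by
  have hx' : ‖x‖ ≠ 0 := norm_ne_zero_iff.2 hx
  have fderiv_norm_zpow {k : ℤ} {y : E} (hy : y ≠ 0) (v : E) :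
      fderiv ℝ (fun z : E => ‖z‖ ^ k) y v = k * ‖y‖ ^ (k - 2) * inner ℝ y v := by
    rw [← inner_gradient_left, gradient_norm_zpow k hy, real_inner_smul_left]
  have fderiv_fderiv_norm_zpow (v : E) :
      fderiv ℝ (fun y => fderiv ℝ (fun z : E => ‖z‖ ^ k) y v) x v =
        k * (k - 2) * ‖x‖ ^ (k - 4) * inner ℝ x v ^ 2 + k * ‖x‖ ^ (k - 2) * ‖v‖ ^ 2 := by
    have hev : (fun y => fderiv ℝ (fun z : E => ‖z‖ ^ k) y v) =ᶠ[𝓝 x]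
        fun y => k * ‖y‖ ^ (k - 2) * inner ℝ y v := by
      filter_upwards [isOpen_ne.mem_nhds hx] with y hy using fderiv_norm_zpow hy v
    have hpow : DifferentiableAt ℝ (fun y : E => ‖y‖ ^ (k - 2)) x :=
      (contDiffAt_norm_zpow (k - 2) hx (n := 1)).differentiableAt one_ne_zero
    have hinner : DifferentiableAt ℝ (fun y : E => inner ℝ y v) x :=
      differentiableAt_fun_id.inner ℝ (differentiableAt_const v)
    rw [hev.fderiv_eq, fderiv_fun_mul (hpow.const_mul _) hinner, fderiv_const_mul hpow]
    simp only [add_apply, smul_apply, differentiableAt_fun_id, differentiableAt_const,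
      fderiv_inner_apply, fderiv_fun_const, Pi.zero_apply, zero_apply, inner_zero_right,
      fderiv_fun_id, ContinuousLinearMap.id_apply, real_inner_self_eq_norm_sq, zero_add,
      smul_eq_mul, fderiv_norm_zpow hx, Int.cast_sub, Int.cast_ofNat]
    rw [show k - 2 - 2 = k - 4 by ring]
    ring
  let b := stdOrthonormalBasis ℝ E
  rw [laplacian_eq_sum_fderiv_fderiv b (contDiffAt_norm_zpow k hx)]
  simp only [fderiv_fderiv_norm_zpow, b.norm_eq_one, one_pow, mul_one, Finset.sum_add_distrib,
    ← Finset.mul_sum, b.sum_sq_inner_left, Finset.sum_const, Finset.card_univ, Fintype.card_fin,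
    nsmul_eq_mul]
  rw [show k - 2 = k - 4 + 2 by ring, zpow_add₀ hx', zpow_ofNat]
  ring

end Norm

section Kelvin

variable {E F : Type*} [NormedAddCommGroup E] [InnerProductSpace ℝ E]
  [NormedAddCommGroup F] [NormedSpace ℝ F]

/-- The inversion `x ↦ x / ‖x‖²` in the unit sphere around the origin; it fixes the centre `0`. -/
def unitInversion : E → E := inversion 0 1

theorem norm_unitInversion (x : E) : ‖unitInversion x‖ = ‖x‖⁻¹ := by
  simpa [unitInversion] using dist_inversion_center (0 : E) x 1

theorem unitInversion_ne_zero {x : E} (hx : x ≠ 0) : unitInversion x ≠ 0 := by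
  rwa [Ne, unitInversion, inversion_eq_center one_ne_zero]

theorem unitInversion_involutive : Function.Involutive (unitInversion (E := E)) :=
  inversion_involutive 0 one_ne_zero

theorem unitInversion_eq_norm_zpow_smul :
    unitInversion (E := E) = fun x => ‖x‖ ^ (-2 : ℤ) • x := by
  ext x
  simp [unitInversion, inversion, zpow_neg]

theorem fderiv_unitInversion {x : E} (hx : x ≠ 0) :
    fderiv ℝ unitInversion x = ‖x‖ ^ (-2 : ℤ) • ((ℝ ∙ x)ᗮ.reflection : E →L[ℝ] E) := by
  simpa [unitInversion, zpow_neg] using (hasFDerivAt_inversion (c := (0 : E)) (R := 1) hx).fderiv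

theorem contDiffAt_unitInversion {n : WithTop ℕ∞} {x : E} (hx : x ≠ 0) :
    ContDiffAt ℝ n unitInversion x := by
  rw [unitInversion_eq_norm_zpow_smul]
  exact (contDiffAt_norm_zpow (-2) hx).smul contDiffAt_id

/-- The Kelvin transform `y ↦ ‖y‖ ^ k • u (y / ‖y‖²)` with weight exponent `k`. In dimension `n`,
`k = 2 - n` gives the classical transform, which preserves harmonicity, and `k = 4 - n` its
biharmonic analogue. -/
def weightedKelvin (k : ℤ) (u : E → F) (y : E) : F :=
  ‖y‖ ^ k • u (unitInversion y)

theorem contDiffAt_weightedKelvin {n : WithTop ℕ∞} (k : ℤ) {u : E → F} {y : E}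
    (hu : ContDiffAt ℝ n u (unitInversion y)) (hy : y ≠ 0) :
    ContDiffAt ℝ n (weightedKelvin k u) y :=
  (contDiffAt_norm_zpow k hy).smul (hu.comp y (contDiffAt_unitInversion hy))

theorem weightedKelvin_norm_zpow_smul (k l : ℤ) (u : E → F) {y : E} (hy : y ≠ 0) :
    weightedKelvin k (fun x => ‖x‖ ^ l • u x) y = weightedKelvin (k - l) u y := by
  simp [weightedKelvin, norm_unitInversion, smul_smul, sub_eq_add_neg,
    zpow_add₀ (norm_ne_zero_iff.2 hy)]

theorem contDiff_norm_zpow_smul {n : WithTop ℕ∞} (k : ℤ) {u : E → F} (hu : ContDiff ℝ n u)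
    (h0 : 0 ∉ tsupport u) : ContDiff ℝ n fun x => ‖x‖ ^ k • u x := by
  refine contDiff_iff_contDiffAt.2 fun x => ?_
  obtain rfl | hx := eq_or_ne x 0
  · have hzero : (fun x => ‖x‖ ^ k • u x) =ᶠ[𝓝 0] fun _ => 0 := by
      filter_upwards [notMem_tsupport_iff_eventuallyEq.1 h0] with x hx
      simp [hx]
    exact contDiffAt_const.congr_of_eventuallyEq hzero
  · exact (contDiffAt_norm_zpow k hx).smul hu.contDiffAt

variable [FiniteDimensional ℝ E]

theorem laplacian_unitInversion {x : E} (hx : x ≠ 0) :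
    Δ (unitInversion (E := E)) x = ((4 - 2 * finrank ℝ E) * ‖x‖ ^ (-4 : ℤ)) • x := by
  have hid : Δ (fun y : E => y) x = 0 := by
    rw [laplacian_eq_sum_fderiv_fderiv (stdOrthonormalBasis ℝ E) contDiffAt_fun_id]
    simp
  rw [unitInversion_eq_norm_zpow_smul,
    laplacian_smul_fun (contDiffAt_norm_zpow _ hx) contDiffAt_fun_id, gradient_norm_zpow _ hx,
    laplacian_norm_zpow _ hx, hid]
  simp only [Int.reduceNeg, smul_zero, fderiv_fun_id, Int.cast_neg, Int.cast_ofNat, Int.reduceSub,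
    ContinuousLinearMap.id_apply, zero_add]
  module

theorem laplacian_weightedKelvin_two_sub_finrank {u : E → F} {y : E}
    (hu : ContDiffAt ℝ 2 u (unitInversion y)) (hy : y ≠ 0) :
    Δ (weightedKelvin (2 - finrank ℝ E) u) y = weightedKelvin (-2 - finrank ℝ E) (Δ u) y := by
  have hinv := contDiffAt_unitInversion (n := 2) hy
  have hweight : Δ (fun z : E => ‖z‖ ^ (2 - finrank ℝ E : ℤ)) y = 0 := by
    rw [laplacian_norm_zpow _ hy]
    simp
  have hcomp : Δ (fun z => u (unitInversion z)) y =
      (‖y‖ ^ (-2 : ℤ)) ^ 2 • Δ u (unitInversion y)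
        + fderiv ℝ u (unitInversion y) (Δ (unitInversion (E := E)) y) :=
    laplacian_comp_of_fderiv_eq_smul_isometry hu hinv (fderiv_unitInversion hy)
  have hradial : fderiv ℝ (fun z => u (unitInversion z)) y y =
      -‖y‖ ^ (-2 : ℤ) • fderiv ℝ u (unitInversion y) y := by
    have h : fderiv ℝ (fun z => u (unitInversion z)) y = _ :=
      fderiv_comp y (hu.differentiableAt two_ne_zero) (hinv.differentiableAt two_ne_zero)
    have hreflect : (ℝ ∙ y)ᗮ.reflection y = -y :=
      Submodule.reflection_orthogonalComplement_singleton_eq_neg y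
    rw [fderiv_unitInversion hy] at h
    simpa [hreflect] using congrArg (fun L => L y) h
  have hy' := norm_ne_zero_iff.2 hy
  have hcompC : ContDiffAt ℝ 2 (fun z => u (unitInversion z)) y := hu.comp y hinv
  unfold weightedKelvin
  rw [laplacian_smul_fun (contDiffAt_norm_zpow _ hy) hcompC, hweight, hcomp,
    laplacian_unitInversion hy, gradient_norm_zpow _ hy]
  simp only [map_smul, hradial]
  simp only [zpow_sub₀ hy', zpow_ofNat, zpow_natCast, Int.reduceNeg, zpow_neg, inv_pow, smul_add,
    Int.cast_sub, Int.cast_ofNat, Int.cast_natCast, sub_sub_cancel_left, neg_smul, smul_neg,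
    zero_smul, add_zero]
  match_scalars <;> field_simp
  ring

theorem laplacian_weightedKelvin_four_sub_finrank {u : E → F} {y : E}
    (hu : ContDiffAt ℝ 2 u (unitInversion y)) (hy : y ≠ 0) :
    Δ (weightedKelvin (4 - finrank ℝ E) u) y =
      weightedKelvin (-2 - finrank ℝ E) (Δ fun x => ‖x‖ ^ (-2 : ℤ) • u x) y := by
  have hweight : weightedKelvin (4 - finrank ℝ E) u =ᶠ[𝓝 y]
      weightedKelvin (2 - finrank ℝ E) fun x => ‖x‖ ^ (-2 : ℤ) • u x := by
    filter_upwards [isOpen_ne.mem_nhds hy] with z hz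
    rw [weightedKelvin_norm_zpow_smul _ _ _ hz]
    congr 1
    ring
  rw [(laplacian_congr_nhds hweight).self_of_nhds]
  exact laplacian_weightedKelvin_two_sub_finrank
    ((contDiffAt_norm_zpow _ (unitInversion_ne_zero hy)).smul hu) hy

theorem abs_det_fderiv_unitInversion {x : E} (hx : x ≠ 0) :
    |(fderiv ℝ unitInversion x).det| = ‖x‖ ^ (-2 * finrank ℝ E : ℤ) := by
  have hdet : ((ℝ ∙ x)ᗮ.reflection : E →L[ℝ] E).det = (-1) ^ finrank ℝ (ℝ ∙ x)ᗮᗮ :=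
    Submodule.det_reflection _
  rw [ContinuousLinearMap.det] at hdet ⊢
  rw [fderiv_unitInversion hx, ContinuousLinearMap.toLinearMap_smul, LinearMap.det_smul, hdet]
  simp [abs_mul, zpow_mul]

variable [MeasurableSpace E] [BorelSpace E] [Nontrivial E] {μ : Measure E} [μ.IsAddHaarMeasure]

theorem integral_comp_unitInversion (f : E → F) :
    ∫ y, ‖y‖ ^ (-2 * finrank ℝ E : ℤ) • f (unitInversion y) ∂μ = ∫ x, f x ∂μ := by
  have himage : unitInversion (E := E) '' {0}ᶜ = {0}ᶜ := by
    have hzero : unitInversion (0 : E) = 0 := by simp [unitInversion]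
    simp [Set.image_compl_eq unitInversion_involutive.bijective, hzero]
  have hfderiv : ∀ x ∈ ({0}ᶜ : Set E),
      HasFDerivWithinAt unitInversion (fderiv ℝ unitInversion x) {0}ᶜ x := fun x hx =>
    have h := (contDiffAt_unitInversion (n := 1) hx).differentiableAt one_ne_zero
    h.hasFDerivAt.hasFDerivWithinAt
  have hae : ({0}ᶜ : Set E) =ᵐ[μ] Set.univ := by simp [ae_eq_univ]
  calc ∫ y, ‖y‖ ^ (-2 * finrank ℝ E : ℤ) • f (unitInversion y) ∂μ
      = ∫ y in {0}ᶜ, ‖y‖ ^ (-2 * finrank ℝ E : ℤ) • f (unitInversion y) ∂μ := by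
        rw [setIntegral_congr_set hae, setIntegral_univ]
    _ = ∫ y in {0}ᶜ, |(fderiv ℝ unitInversion y).det| • f (unitInversion y) ∂μ :=
        setIntegral_congr_fun (measurableSet_singleton 0).compl fun y hy => by
          simp only [abs_det_fderiv_unitInversion hy]
    _ = ∫ x in {0}ᶜ, f x ∂μ := by
        rw [← integral_image_eq_integral_abs_det_fderiv_smul μ (measurableSet_singleton 0).compl
          hfderiv unitInversion_involutive.injective.injOn, himage]
    _ = ∫ x, f x ∂μ := by rw [setIntegral_congr_set hae, setIntegral_univ]

theorem integral_sq_weightedKelvin (u : E → ℝ) :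
    ∫ y, weightedKelvin (-2 - finrank ℝ E) u y ^ 2 ∂μ = ∫ x, (‖x‖ ^ 2 * u x) ^ 2 ∂μ := by
  rw [← integral_comp_unitInversion fun x => (‖x‖ ^ 2 * u x) ^ 2]
  refine integral_congr_ae ?_
  filter_upwards [Measure.ae_ne μ 0] with y hy
  have hy' := norm_ne_zero_iff.2 hy
  simp only [weightedKelvin, norm_unitInversion, smul_eq_mul, zpow_sub₀ hy', zpow_neg, zpow_mul,
    neg_mul, zpow_natCast, zpow_ofNat]
  field_simp
  ring

theorem integral_sq_laplacian_weightedKelvin {u : E → ℝ} (hu : ContDiff ℝ 2 u) :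
    ∫ y, Δ (weightedKelvin (4 - finrank ℝ E) u) y ^ 2 ∂μ =
      ∫ x, (‖x‖ ^ 2 * Δ (fun z => ‖z‖ ^ (-2 : ℤ) • u z) x) ^ 2 ∂μ := by
  rw [← integral_sq_weightedKelvin]
  refine integral_congr_ae ?_
  filter_upwards [Measure.ae_ne μ 0] with y hy
  rw [laplacian_weightedKelvin_four_sub_finrank hu.contDiffAt hy]

end Kelvin

section IntegrationByParts

theorem integrable_mul_of_hasCompactSupport {X : Type*} [TopologicalSpace X] [MeasurableSpace X]
    [OpensMeasurableSpace X] {μ : Measure X} [IsFiniteMeasureOnCompacts μ] {f g : X → ℝ}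
    (hf : Continuous f) (hg : Continuous g) (hfc : HasCompactSupport f) :
    Integrable (fun x => f x * g x) μ :=
  (hf.mul hg).integrable_of_hasCompactSupport hfc.mul_right

section NormedSpace

variable {E : Type*} [NormedAddCommGroup E] [NormedSpace ℝ E] [FiniteDimensional ℝ E]
  [MeasurableSpace E] [BorelSpace E] {μ : Measure E} [μ.IsAddHaarMeasure]

theorem integral_mul_fderiv_apply {f g : E → ℝ} (hf : ContDiff ℝ 1 f) (hg : ContDiff ℝ 1 g)
    (hfc : HasCompactSupport f) (v : E) :
    ∫ x, f x * fderiv ℝ g x v ∂μ = -∫ x, fderiv ℝ f x v * g x ∂μ :=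
  integral_mul_fderiv_eq_neg_fderiv_mul_of_integrable
    (integrable_mul_of_hasCompactSupport (continuous_fderiv_apply hf v) hg.continuous
      (hfc.fderiv_apply ℝ v))
    (integrable_mul_of_hasCompactSupport hf.continuous (continuous_fderiv_apply hg v) hfc)
    (integrable_mul_of_hasCompactSupport hf.continuous hg.continuous hfc)
    (fun x _ => hf.differentiable one_ne_zero x) (fun x _ => hg.differentiable one_ne_zero x)

theorem integral_fderiv_apply_self {f : E → ℝ} (hf : ContDiff ℝ 1 f) (hfc : HasCompactSupport f) :
    ∫ x, fderiv ℝ f x x ∂μ = -(finrank ℝ E * ∫ x, f x ∂μ) := by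
  let b := finBasis ℝ E
  let coord (i : Fin (finrank ℝ E)) : E →L[ℝ] ℝ := (b.coord i).toContinuousLinearMap
  have hsum (x : E) : fderiv ℝ f x x = ∑ i, fderiv ℝ f x (b i) * coord i x := by
    have h := congrArg (fderiv ℝ f x) (b.sum_repr x)
    rw [map_sum] at h
    simpa [coord, mul_comm] using h.symm
  have hparts (i) : ∫ x, fderiv ℝ f x (b i) * coord i x ∂μ = -∫ x, f x ∂μ := by
    have hcoord : coord i (b i) = 1 := by simp [coord]
    rw [← neg_eq_iff_eq_neg, ← integral_mul_fderiv_apply hf (coord i).contDiff hfc]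
    simp [hcoord]
  simp only [hsum]
  rw [integral_finsetSum]
  · simp [hparts]
  · exact fun i _ => integrable_mul_of_hasCompactSupport (continuous_fderiv_apply hf _)
      (coord i).continuous (hfc.fderiv_apply ℝ _)

end NormedSpace

variable {E : Type*} [NormedAddCommGroup E] [InnerProductSpace ℝ E] [FiniteDimensional ℝ E]
  [MeasurableSpace E] [BorelSpace E] {μ : Measure E} [μ.IsAddHaarMeasure]

theorem integral_mul_laplacian_comm {f g : E → ℝ} (hf : ContDiff ℝ 2 f) (hg : ContDiff ℝ 2 g)
    (hfc : HasCompactSupport f) :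
    ∫ x, f x * Δ g x ∂μ = ∫ x, Δ f x * g x ∂μ := by
  let b := stdOrthonormalBasis ℝ E
  have hf' (v : E) : ContDiff ℝ 1 fun x => fderiv ℝ f x v := contDiff_fderiv_apply hf le_rfl v
  have hg' (v : E) : ContDiff ℝ 1 fun x => fderiv ℝ g x v := contDiff_fderiv_apply hg le_rfl v
  simp only [laplacian_eq_sum_fderiv_fderiv b hf.contDiffAt,
    laplacian_eq_sum_fderiv_fderiv b hg.contDiffAt, Finset.mul_sum, Finset.sum_mul]
  rw [integral_finsetSum, integral_finsetSum]
  · refine Finset.sum_congr rfl fun i _ => ?_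
    rw [integral_mul_fderiv_apply (hf.of_le one_le_two) (hg' _) hfc,
      integral_mul_fderiv_apply (hf' _) (hg.of_le one_le_two) (hfc.fderiv_apply ℝ _), neg_neg]
  · exact fun i _ => integrable_mul_of_hasCompactSupport (continuous_fderiv_apply (hf' _) _)
      hg.continuous ((hfc.fderiv_apply ℝ _).fderiv_apply ℝ _)
  · exact fun i _ => integrable_mul_of_hasCompactSupport hf.continuous
      (continuous_fderiv_apply (hg' _) _) hfc

end IntegrationByParts

section DilationGenerator

section NormedSpace

variable {E : Type*} [NormedAddCommGroup E] [NormedSpace ℝ E]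

/-- The generator `x · ∇ + n / 2`, with `n = dim E`, of the dilations
`f ↦ e ^ (t * n / 2) * f (e ^ t * x)`. The constant `n / 2` makes these dilations unitary on `L²`,
hence their generator skew-symmetric. -/
def dilationGenerator (f : E → ℝ) (x : E) : ℝ :=
  fderiv ℝ f x x + finrank ℝ E / 2 * f x

theorem contDiff_dilationGenerator {m n : WithTop ℕ∞} {f : E → ℝ} (hf : ContDiff ℝ n f)
    (hmn : m + 1 ≤ n) : ContDiff ℝ m (dilationGenerator f) :=
  (contDiff_fderiv_apply_self hf hmn).add (contDiff_const.mul (hf.of_le (le_self_add.trans hmn)))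

theorem hasCompactSupport_dilationGenerator {f : E → ℝ} (hf : HasCompactSupport f) :
    HasCompactSupport (dilationGenerator f) :=
  (hasCompactSupport_fderiv_apply_self hf).add hf.mul_left

variable [FiniteDimensional ℝ E] [MeasurableSpace E] [BorelSpace E] {μ : Measure E}
  [μ.IsAddHaarMeasure]

theorem integral_mul_dilationGenerator {f g : E → ℝ} (hf : ContDiff ℝ 1 f) (hg : ContDiff ℝ 1 g)
    (hfc : HasCompactSupport f) :
    ∫ x, f x * dilationGenerator g x ∂μ = -∫ x, dilationGenerator f x * g x ∂μ := by
  have hfg : ContDiff ℝ 1 fun x => f x * g x := hf.mul hg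
  have hHf := (contDiff_dilationGenerator (m := 0) hf (by simp)).continuous
  have hHg := (contDiff_dilationGenerator (m := 0) hg (by simp)).continuous
  have leibniz (x : E) : f x * dilationGenerator g x + dilationGenerator f x * g x =
      fderiv ℝ (fun y => f y * g y) x x + finrank ℝ E * (f x * g x) := by
    rw [fderiv_fun_mul (hf.differentiable one_ne_zero x) (hg.differentiable one_ne_zero x)]
    simp only [dilationGenerator, add_apply, smul_apply, smul_eq_mul]
    ring
  have hEuler : Integrable (fun x => fderiv ℝ (fun y => f y * g y) x x) μ :=
    (contDiff_fderiv_apply_self (m := 0) hfg (by simp)).continuous.integrable_of_hasCompactSupport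
      (hasCompactSupport_fderiv_apply_self hfc.mul_right)
  rw [eq_neg_iff_add_eq_zero, ← integral_add'
    (integrable_mul_of_hasCompactSupport hf.continuous hHg hfc)
    (integrable_mul_of_hasCompactSupport hHf hg.continuous
      (hasCompactSupport_dilationGenerator hfc))]
  simp only [Pi.add_apply, leibniz]
  rw [integral_add hEuler
    ((integrable_mul_of_hasCompactSupport hf.continuous hg.continuous hfc).const_mul _),
    integral_fderiv_apply_self hfg hfc.mul_right, integral_const_mul, neg_add_cancel]

end NormedSpace

variable {E : Type*} [NormedAddCommGroup E] [InnerProductSpace ℝ E] [FiniteDimensional ℝ E]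

theorem laplacian_norm_sq_mul {f : E → ℝ} {x : E} (hf : ContDiffAt ℝ 2 f x) :
    Δ (fun y => ‖y‖ ^ 2 * f y) x = ‖x‖ ^ 2 * Δ f x + 4 * dilationGenerator f x := by
  have h := laplacian_smul_fun (contDiff_norm_sq ℝ).contDiffAt hf
  simp only [gradient_norm_sq, laplacian_norm_sq, map_smul, smul_eq_mul] at h
  rw [h, dilationGenerator]
  ring

theorem laplacian_dilationGenerator {f : E → ℝ} (hf : ContDiff ℝ 3 f) (x : E) :
    Δ (dilationGenerator f) x = fderiv ℝ (Δ f) x x + (2 + finrank ℝ E / 2) * Δ f x := by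
  have hf2 : ContDiff ℝ 2 f := hf.of_le (by norm_num)
  have h := ContDiffAt.laplacian_add (x := x)
    (contDiff_fderiv_apply_self (m := 2) hf (by norm_num)).contDiffAt
    (f₂ := (finrank ℝ E / 2 : ℝ) • f) (contDiff_const.smul hf2).contDiffAt
  rw [laplacian_fderiv_apply_self hf, laplacian_smul _ hf2.contDiffAt] at h
  refine Eq.trans h ?_
  simp only [smul_eq_mul]
  ring

theorem dilationGenerator_norm_sq_mul_laplacian {f : E → ℝ} (hf : ContDiff ℝ 3 f) (x : E) :
    dilationGenerator (fun y => ‖y‖ ^ 2 * Δ f y) x = ‖x‖ ^ 2 * Δ (dilationGenerator f) x := by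
  have hΔ : DifferentiableAt ℝ (Δ f) x :=
    (contDiff_laplacian (m := 1) hf (by norm_num)).differentiable one_ne_zero x
  have hsq : DifferentiableAt ℝ (fun y : E => ‖y‖ ^ 2) x := differentiableAt_id.norm_sq ℝ
  rw [laplacian_dilationGenerator hf, dilationGenerator, fderiv_fun_mul hsq hΔ]
  simp only [fderiv_norm_sq_apply, add_apply, smul_apply, smul_eq_mul, coe_innerSL_apply,
    real_inner_self_eq_norm_sq, nsmul_eq_mul, Nat.cast_ofNat]
  ring

variable [MeasurableSpace E] [BorelSpace E] {μ : Measure E} [μ.IsAddHaarMeasure]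

theorem integral_dilationGenerator_mul_laplacian_norm_sq_mul {f : E → ℝ} (hf : ContDiff ℝ 3 f)
    (hfc : HasCompactSupport f) :
    ∫ x, dilationGenerator f x * Δ (fun y => ‖y‖ ^ 2 * f y) x ∂μ =
      -∫ x, dilationGenerator f x * (‖x‖ ^ 2 * Δ f x) ∂μ := by
  have hM : ContDiff ℝ 2 fun y => ‖y‖ ^ 2 * f y :=
    (contDiff_norm_sq ℝ).mul (hf.of_le (by norm_num))
  have hMΔ : ContDiff ℝ 1 fun y => ‖y‖ ^ 2 * Δ f y :=
    (contDiff_norm_sq ℝ).mul (contDiff_laplacian hf (by norm_num))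
  have hMΔc : HasCompactSupport fun y => ‖y‖ ^ 2 * Δ f y :=
    (hasCompactSupport_laplacian hfc).mul_left
  calc ∫ x, dilationGenerator f x * Δ (fun y => ‖y‖ ^ 2 * f y) x ∂μ
      = ∫ x, Δ (dilationGenerator f) x * (‖x‖ ^ 2 * f x) ∂μ := by
        rw [integral_mul_laplacian_comm (contDiff_dilationGenerator hf (by norm_num)) hM
          (hasCompactSupport_dilationGenerator hfc)]
    _ = ∫ x, dilationGenerator (fun y => ‖y‖ ^ 2 * Δ f y) x * f x ∂μ := by
        simp only [dilationGenerator_norm_sq_mul_laplacian hf, mul_left_comm, mul_assoc]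
    _ = -∫ x, ‖x‖ ^ 2 * Δ f x * dilationGenerator f x ∂μ := by
        rw [integral_mul_dilationGenerator hMΔ (hf.of_le (by norm_num)) hMΔc, neg_neg]
    _ = -∫ x, dilationGenerator f x * (‖x‖ ^ 2 * Δ f x) ∂μ := by simp only [mul_comm]

theorem integral_sq_laplacian_norm_sq_mul {f : E → ℝ} (hf : ContDiff ℝ 3 f)
    (hfc : HasCompactSupport f) :
    ∫ x, Δ (fun y => ‖y‖ ^ 2 * f y) x ^ 2 ∂μ = ∫ x, (‖x‖ ^ 2 * Δ f x) ^ 2 ∂μ := by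
  let A : E → ℝ := Δ fun y => ‖y‖ ^ 2 * f y
  let B : E → ℝ := fun y => ‖y‖ ^ 2 * Δ f y
  let H : E → ℝ := dilationGenerator f
  have hA : Continuous A :=
    (contDiff_laplacian (m := 1) ((contDiff_norm_sq ℝ).mul hf) (by norm_num)).continuous
  have hB : Continuous B :=
    (continuous_norm.pow 2).mul (contDiff_laplacian (m := 1) hf (by norm_num)).continuous
  have hH : Continuous H := (contDiff_dilationGenerator (m := 2) hf (by norm_num)).continuous
  have hBc : HasCompactSupport B := (hasCompactSupport_laplacian hfc).mul_left
  have hHc : HasCompactSupport H := hasCompactSupport_dilationGenerator hfc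
  have hAB (x : E) : A x = B x + 4 * H x :=
    laplacian_norm_sq_mul (hf.of_le (by norm_num)).contDiffAt
  have hdiff (x : E) : A x ^ 2 = B x ^ 2 + 4 * (H x * A x + H x * B x) := by
    rw [hAB]
    ring
  have hBB : Integrable (fun x => B x ^ 2) μ := by
    simpa only [sq] using integrable_mul_of_hasCompactSupport hB hB hBc
  have hHA : Integrable (fun x => H x * A x) μ := integrable_mul_of_hasCompactSupport hH hA hHc
  have hHB : Integrable (fun x => H x * B x) μ := integrable_mul_of_hasCompactSupport hH hB hHc
  calc ∫ x, A x ^ 2 ∂μ = ∫ x, B x ^ 2 + 4 * (H x * A x + H x * B x) ∂μ := by simp only [hdiff]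
    _ = ∫ x, B x ^ 2 ∂μ + 4 * (∫ x, H x * A x ∂μ + ∫ x, H x * B x ∂μ) := by
        rw [integral_add hBB (by exact (hHA.add hHB).const_mul 4), integral_const_mul,
          integral_add hHA hHB]
    _ = ∫ x, B x ^ 2 ∂μ := by
        rw [integral_dilationGenerator_mul_laplacian_norm_sq_mul hf hfc, neg_add_cancel, mul_zero,
          add_zero]

end DilationGenerator

theorem norm_sq_mul_norm_zpow_neg_two_smul {E : Type*} [NormedAddCommGroup E] {u : E → ℝ}
    (h0 : u 0 = 0) : (fun x => ‖x‖ ^ 2 * (‖x‖ ^ (-2 : ℤ) • u x)) = u := by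
  ext x
  obtain rfl | hx := eq_or_ne x 0
  · simp [h0]
  · rw [smul_eq_mul, zpow_neg, zpow_ofNat,
      mul_inv_cancel_left₀ (pow_ne_zero 2 (norm_ne_zero_iff.2 hx))]

theorem kelvin_laplacian_isometry_general {E : Type*} [NormedAddCommGroup E]
    [InnerProductSpace ℝ E] [FiniteDimensional ℝ E] [Nontrivial E] [MeasurableSpace E]
    [BorelSpace E] (μ : Measure E) [μ.IsAddHaarMeasure] {u : E → ℝ} (hu : ContDiff ℝ 3 u)
    (hsupp : HasCompactSupport u) (h0 : 0 ∉ tsupport u) :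
    ∫ y, Δ (weightedKelvin (4 - finrank ℝ E) u) y ^ 2 ∂μ = ∫ x, Δ u x ^ 2 ∂μ := by
  have hv : ContDiff ℝ 3 fun x => ‖x‖ ^ (-2 : ℤ) • u x := contDiff_norm_zpow_smul (-2) hu h0
  have hvc : HasCompactSupport fun x => ‖x‖ ^ (-2 : ℤ) • u x := hsupp.mul_left
  rw [integral_sq_laplacian_weightedKelvin (hu.of_le (by norm_num)),
    ← integral_sq_laplacian_norm_sq_mul hv hvc,
    norm_sq_mul_norm_zpow_neg_two_smul (image_eq_zero_of_notMem_tsupport h0)]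

theorem lap_eq_laplacian {f : E3 → ℝ} {x : E3} (hf : ContDiffAt ℝ 2 f x) : lap f x = Δ f x := by
  simp [lap, laplacian_eq_sum_fderiv_fderiv (EuclideanSpace.basisFun (Fin 3) ℝ) hf]

theorem integral_sq_lap {f : E3 → ℝ} (hf : ∀ x ≠ 0, ContDiffAt ℝ 2 f x) :
    ∫ x, lap f x ^ 2 = ∫ x, Δ f x ^ 2 := by
  refine integral_congr_ae ?_
  filter_upwards [Measure.ae_ne volume 0] with x hx
  rw [lap_eq_laplacian (hf x hx)]

theorem kelvin_eq_weightedKelvin (u : E3 → ℝ) : kelvin u = weightedKelvin 1 u := by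
  ext y
  simp [kelvin, weightedKelvin, unitInversion_eq_norm_zpow_smul, zpow_neg]

/-- The Kelvin transform is an `L²`-isometry for the Laplacian:
`∫ |ΔU|² dy = ∫ |Δu|² dx`. -/
theorem kelvin_laplacian_isometry (u : E3 → ℝ) (hu : ContDiff ℝ (⊤ : ℕ∞) u)
    (hsupp : HasCompactSupport u) (h0 : tsupport u ⊆ {x : E3 | x ≠ 0}) :
    (∫ y : E3, (lap (kelvin u) y) ^ 2) = ∫ x : E3, (lap u x) ^ 2 := by
  have hu3 : ContDiff ℝ 3 u := mod_cast contDiff_infty.1 hu 3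
  have hu2 : ContDiff ℝ 2 u := hu3.of_le (by norm_num)
  have h := kelvin_laplacian_isometry_general volume hu3 hsupp fun h => h0 h rfl
  rw [finrank_euclideanSpace_fin] at h
  rw [kelvin_eq_weightedKelvin,
    integral_sq_lap fun y hy => contDiffAt_weightedKelvin 1 hu2.contDiffAt hy,
    integral_sq_lap fun x _ => hu2.contDiffAt]
  exact h

end
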